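/- arXiv:1707.00052 — 2 statements merged into one kernel-verified Lean document; each statement's English description precedes it below -/
import Mathlib

section
/- For all integers q ≥ 2, ℓ ≥ 1, n ≥ 2ℓ and every x ∈ Z_q^n, the size of the single palindromic deletion sphere satisfies |S_{π^δ,ℓ}(x)| ≤ r^{(0)}(A^π_ℓ(x)) + 1, where A^π_ℓ(x) ∈ Z_q^{ℓ×(n−2ℓ+1)} is the matrix whose entry in row s (1 ≤ s ≤ ℓ) and column c (1 ≤ c ≤ n−2ℓ+1) equals x_{2ℓ+c−s} − x_{c+s−1} (so column c is (x_{2ℓ+c−1}−x_c, x_{2ℓ+c−2}−x_{c+1}, …, x_{ℓ+c}−x_{ℓ+c−1})), and r^{(0)}(A^π_ℓ(x)) is the number of maximal blocks of consecutive all-zero columns of A^π_ℓ(x). -/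
/-!
A column of the matrix vanishes exactly when the window of length `2ℓ` starting there is a
palindrome, i.e. when a palindromic deletion is defined at that position. If two consecutive
windows are both palindromes, composing the reflections in their centres, which are one place
apart, shows that the word has period `2` on their union. Each reflection also exchanges the two
symbols next to its centre, so the word is even constant there: both deletions remove `ℓ` symbols
from the same run and give the same word. Hence every block of zero columns contributes at most
one word, and the undeleted word contributes the additional `1`.
-/

namespace DupPaper

variable {α : Type*}

/-- `y` is obtained from `x` by one tandem duplication of length `ℓ`. -/
def TDup (ℓ : ℕ) (x y : List α) : Prop :=
  ∃ u v w : List α, v.length = ℓ ∧ x = u ++ v ++ w ∧ y = u ++ v ++ v ++ w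

/-- `y` is obtained from `x` by one tandem deletion of length `ℓ`. -/
def TDel (ℓ : ℕ) (x y : List α) : Prop :=
  ∃ u v w : List α, v.length = ℓ ∧ x = u ++ v ++ v ++ w ∧ y = u ++ v ++ w

/-- `y` is obtained from `x` by one palindromic duplication of length `ℓ`. -/
def PDup (ℓ : ℕ) (x y : List α) : Prop :=
  ∃ u v w : List α, v.length = ℓ ∧ x = u ++ v ++ w ∧ y = u ++ v ++ v.reverse ++ w

/-- `y` is obtained from `x` by one palindromic deletion of length `ℓ`. -/
def PDel (ℓ : ℕ) (x y : List α) : Prop :=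
  ∃ u v w : List α, v.length = ℓ ∧ x = u ++ v ++ v.reverse ++ w ∧ y = u ++ v ++ w

/-- `y` is reached from `x` by exactly `k` steps of the relation `rel`. -/
def reachK (rel : List α → List α → Prop) : ℕ → List α → List α → Prop
  | 0, x, y => x = y
  | k + 1, x, y => ∃ z, rel x z ∧ reachK rel k z y

/-- The sphere of all words reachable from `x` by at most `t` operations of type `rel`
(in particular it contains `x` itself). -/
def sphere (rel : List α → List α → Prop) (t : ℕ) (x : List α) : Set (List α) :=
  {y | ∃ k ≤ t, reachK rel k x y}

/-- A code `C` is `t`-error correcting for the error type `rel` if distinct codewords have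
disjoint spheres. -/
def Correcting (rel : List α → List α → Prop) (t : ℕ) (C : Set (List α)) : Prop :=
  ∀ c₁ ∈ C, ∀ c₂ ∈ C, (sphere rel t c₁ ∩ sphere rel t c₂).Nonempty → c₁ = c₂

/-- The list of maximal runs (maximal blocks of identical consecutive symbols) of a word. -/
def runs [DecidableEq α] : List α → List (List α)
  | [] => []
  | a :: rest =>
    match runs rest with
    | [] => [[a]]
    | r :: rs => if r.head? = some a then (a :: r) :: rs else [a] :: r :: rs

/-- `r(x)`: the number of runs of `x`. -/
def numRuns [DecidableEq α] (x : List α) : ℕ := (runs x).length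

/-- `r_i(x)`: the number of runs of `x` of length exactly `i`. -/
def numRunsEq [DecidableEq α] (x : List α) (i : ℕ) : ℕ :=
  ((runs x).filter (fun r => r.length = i)).length

/-- `r_{≥ i}(x)`: the number of runs of `x` of length at least `i`. -/
def numRunsGe [DecidableEq α] (x : List α) (i : ℕ) : ℕ :=
  ((runs x).filter (fun r => i ≤ r.length)).length

/-- `r_{I,2}(x)`: the number of runs of length exactly `2` located in the interior of `x`,
i.e. runs that are neither the first nor the last run of `x`. -/
def numInteriorRuns2 [DecidableEq α] (x : List α) : ℕ :=
  ((((runs x).drop 1).dropLast).filter (fun r => r.length = 2)).length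

/-- The second component `v` of the `ℓ`-step derivative `φ_ℓ(x) = (u, v)`:
`v = (x_{ℓ+1}, …, x_n) − (x_1, …, x_{n−ℓ})` componentwise in `Z_q`. -/
def derivV (q ℓ : ℕ) (x : List (ZMod q)) : List (ZMod q) :=
  List.zipWith (· - ·) (x.drop ℓ) x

/-- Hamming weight: the number of nonzero entries. -/
def wtH {q : ℕ} (v : List (ZMod q)) : ℕ := (v.filter (fun a => a ≠ 0)).length

/-- The lengths `(m_0, m_1, …, m_p)` of the (possibly empty) maximal zero runs of `v`,
where `v = (0^{m_0}, w_1, 0^{m_1}, w_2, …, w_p, 0^{m_p})` with all `w_i ≠ 0`. -/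
def zeroRunLengths {q : ℕ} : List (ZMod q) → List ℕ
  | [] => [0]
  | a :: rest =>
    let t := zeroRunLengths rest
    if a = 0 then
      match t with
      | [] => [1]
      | m :: ms => (m + 1) :: ms
    else 0 :: t

/-- The `ℓ`-zero signature `σ_ℓ(v) = (⌊m_0/ℓ⌋, …, ⌊m_p/ℓ⌋)` of `v = derivV q ℓ x`. -/
def sig (q ℓ : ℕ) (x : List (ZMod q)) : List ℕ :=
  (zeroRunLengths (derivV q ℓ x)).map (· / ℓ)

/-- The trunk `μ_ℓ(v)`: every maximal zero run of length `m` is shortened to length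
`m mod ℓ`. -/
def trunk (q ℓ : ℕ) (v : List (ZMod q)) : List (ZMod q) :=
  ((runs v).map (fun r =>
    if r.head? = some (0 : ZMod q) then List.replicate (r.length % ℓ) (0 : ZMod q) else r)).flatten

/-- The root `ρ_ℓ(x) = (u, μ_ℓ(v))` where `φ_ℓ(x) = (u, v)` is the `ℓ`-step derivative. -/
def root (q ℓ : ℕ) (x : List (ZMod q)) : List (ZMod q) × List (ZMod q) :=
  (x.take ℓ, trunk q ℓ (derivV q ℓ x))

/-- `ℓ1`-distance of two lists of naturals. -/
def l1diff (a b : List ℕ) : ℕ := (List.zipWith (fun s t => max s t - min s t) a b).sum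

/-- The tandem duplication distance `d_{τ,ℓ}`. -/
def tdDist (q ℓ : ℕ) (x₁ x₂ : List (ZMod q)) : ℕ∞ :=
  if root q ℓ x₁ = root q ℓ x₂ then (l1diff (sig q ℓ x₁) (sig q ℓ x₂) : ℕ∞) else ⊤

/-- The palindromic duplication `π_{i,ℓ}(x) = (u v v^R w)` at position `i`,
where `x = (u v w)`, `|u| = i`, `|v| = ℓ`. -/
def pdupAt (i ℓ : ℕ) (x : List α) : List α :=
  x.take (i + ℓ) ++ ((x.drop i).take ℓ).reverse ++ x.drop (i + ℓ)

/-- The result `(u v w)` of the palindromic deletion `π^δ_{i,ℓ}` applied to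
`x = (u v v^R w)` with `|u| = i`, `|v| = ℓ`. -/
def pdelAt (i ℓ : ℕ) (x : List α) : List α :=
  x.take (i + ℓ) ++ x.drop (i + 2 * ℓ)

/-- The palindromic deletion `π^δ_{i,ℓ}` is defined at position `i` of `x`, i.e. `x` has the
form `(u v v^R w)` with `|u| = i` and `|v| = ℓ`. -/
def PDelDefinedAt (q ℓ i : ℕ) (x : List (ZMod q)) : Prop :=
  ∃ u v w : List (ZMod q), u.length = i ∧ v.length = ℓ ∧ x = u ++ v ++ v.reverse ++ w

/-- `A(n', ℓ', ω)`: the number of words in `Z_q^{n'}` whose maximal zero runs all have length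
at most `ℓ'` and whose Hamming weight is `ω`. -/
noncomputable def Acount (q n' ℓ' ω : ℕ) : ℕ :=
  {x : Fin n' → ZMod q | wtH (List.ofFn x) = ω ∧
    ∀ r ∈ runs (List.ofFn x), r.head? = some (0 : ZMod q) → r.length ≤ ℓ'}.ncard

/-- Integer binomial coefficient with the conventions `C(a,b) = 0` for `a ≥ 0 > b` or
`0 ≤ a < b`, `C(-1,-1) = 1`, and `C(a,-1) = 0` for `a ≥ 0`. -/
def ichoose (a b : ℤ) : ℕ :=
  if a = -1 ∧ b = -1 then 1
  else if 0 ≤ a ∧ 0 ≤ b then Nat.choose a.toNat b.toNat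
  else 0

/-- `r^{(0)}(A^π_ℓ(x))`: the number of maximal blocks of consecutive all-zero columns of the
matrix `A^π_ℓ(x) ∈ Z_q^{ℓ × (n−2ℓ+1)}` whose entry in row `s` and column `c`
(`1 ≤ s ≤ ℓ`, `1 ≤ c ≤ n−2ℓ+1`) is `x_{2ℓ+c−s} − x_{c+s−1}`. -/
def zeroColBlocks (q ℓ n : ℕ) (x : List (ZMod q)) : ℕ :=
  ((runs ((List.range (n - 2 * ℓ + 1)).map (fun c =>
      (List.range ℓ).all (fun s =>
        x.getD (2 * ℓ + c - s - 1) (0 : ZMod q) = x.getD (c + s) (0 : ZMod q))))).filter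
    (fun r => r.head? = some true)).length

/-- The number of runs of `L` consisting of the symbol `a`, generalizing the count of zero blocks
in `zeroColBlocks`, which is the case `a = true`. -/
def numRunsOf [DecidableEq α] (a : α) (L : List α) : ℕ :=
  ((runs L).filter (fun r => r.head? = some a)).length

lemma exists_runs_cons_eq [DecidableEq α] (a : α) (L : List α) :
    ∃ r rs, runs (a :: L) = (a :: r) :: rs := by
  simp only [runs]
  split
  · exact ⟨[], [], rfl⟩
  · split
    · exact ⟨_, _, rfl⟩
    · exact ⟨[], _, rfl⟩

lemma numRunsOf_cons [DecidableEq α] (a b : α) (L : List α) :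
    numRunsOf a (b :: L) = numRunsOf a L + if b = a ∧ L.head? ≠ some a then 1 else 0 := by
  cases L with
  | nil => by_cases hb : b = a <;> simp [numRunsOf, runs, hb]
  | cons c L =>
    obtain ⟨r, rs, hr⟩ := exists_runs_cons_eq c L
    have hruns : runs (b :: c :: L) =
        if c = b then (b :: c :: r) :: rs else [b] :: (c :: r) :: rs := by
      rw [runs, hr]
      simp only [List.head?_cons, Option.some.injEq]
    rw [numRunsOf, numRunsOf, hruns, hr]
    by_cases hb : b = a <;> by_cases hc : c = a <;> by_cases hcb : c = b <;> simp_all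

lemma image_setOf_getElem?_cons {β : Type*} (a b : α) (L : List α) (g : ℕ → β) :
    g '' {i | (b :: L)[i]? = some a} =
      {y | b = a ∧ g 0 = y} ∪ (fun i => g (i + 1)) '' {i | L[i]? = some a} := by
  ext y
  constructor
  · rintro ⟨_ | i, hi, rfl⟩
    · exact .inl ⟨by simpa using hi, rfl⟩
    · exact .inr ⟨i, by simpa using hi, rfl⟩
  · rintro (⟨rfl, rfl⟩ | ⟨i, hi, rfl⟩)
    · exact ⟨0, by simp, rfl⟩
    · exact ⟨i + 1, by simpa using hi, rfl⟩

lemma encard_image_le_numRunsOf [DecidableEq α] {β : Type*} (a : α) (L : List α) (g : ℕ → β)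
    (hg : ∀ i, L[i]? = some a → L[i + 1]? = some a → g i = g (i + 1)) :
    (g '' {i | L[i]? = some a}).encard ≤ numRunsOf a L := by
  induction L generalizing g with
  | nil => simp
  | cons b L ih =>
    have tail_le := ih (fun i => g (i + 1)) fun i hi hi' =>
      hg (i + 1) (by simpa using hi) (by simpa using hi')
    rw [image_setOf_getElem?_cons, numRunsOf_cons]
    by_cases new_run : b = a ∧ L.head? ≠ some a
    · rw [if_pos new_run, add_comm, Nat.cast_add, Nat.cast_one]
      have head_le : {y | b = a ∧ g 0 = y}.encard ≤ 1 :=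
        Set.encard_le_one_iff.2 fun _ _ hy hz => hy.2.symm.trans hz.2
      exact (Set.encard_union_le _ _).trans (add_le_add head_le tail_le)
    · rw [if_neg new_run, add_zero, Set.union_eq_self_of_subset_left]
      · exact tail_le
      rintro _ ⟨rfl, rfl⟩
      have head_eq : L[0]? = some b := by
        simpa [List.head?_eq_getElem?] using new_run
      exact ⟨0, head_eq, (hg 0 rfl (by simpa using head_eq)).symm⟩

/-- The word `x` has a palindrome of length `2ℓ` starting at the 0-indexed position `c`, so that
a palindromic deletion of length `ℓ` is defined there. Symbols are compared through `[·]?`, and all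
positions involved are in range by the first conjunct. -/
def PalindromeAt (ℓ c : ℕ) (x : List α) : Prop :=
  c + 2 * ℓ ≤ x.length ∧ ∀ s < ℓ, x[2 * ℓ + c - s - 1]? = x[c + s]?

instance [DecidableEq α] (ℓ c : ℕ) (x : List α) : Decidable (PalindromeAt ℓ c x) :=
  inferInstanceAs (Decidable (_ ∧ _))

lemma palindromeAt_append (u v w : List α) :
    PalindromeAt v.length u.length (u ++ v ++ v.reverse ++ w) := by
  refine ⟨by simp only [List.length_append, List.length_reverse]; omega, fun s hs => ?_⟩
  have right_half : (u ++ v ++ v.reverse ++ w)[2 * v.length + u.length - s - 1]? = v[s]? := by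
    rw [List.append_assoc _ v.reverse,
      List.getElem?_append_right (by rw [List.length_append]; omega), List.length_append,
      List.getElem?_append_left (by rw [List.length_reverse]; omega),
      List.getElem?_reverse (by omega)]
    congr 1
    omega
  have left_half : (u ++ v ++ v.reverse ++ w)[u.length + s]? = v[s]? := by
    rw [List.append_assoc, List.append_assoc, List.getElem?_append_right (by omega),
      Nat.add_sub_cancel_left, List.getElem?_append_left hs]
  rw [right_half, left_half]

lemma pdelAt_append (u v w : List α) :
    pdelAt u.length v.length (u ++ v ++ v.reverse ++ w) = u ++ v ++ w := by
  have take_eq : (u ++ v ++ v.reverse ++ w).take (u.length + v.length) = u ++ v := by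
    rw [List.append_assoc, List.take_left' List.length_append]
  have drop_eq : (u ++ v ++ v.reverse ++ w).drop (u.length + 2 * v.length) = w :=
    List.drop_left' (by simp only [List.length_append, List.length_reverse]; omega)
  rw [pdelAt, take_eq, drop_eq]

lemma PDel.exists_pdelAt_eq {ℓ : ℕ} {x y : List α} (h : PDel ℓ x y) :
    ∃ c, PalindromeAt ℓ c x ∧ pdelAt c ℓ x = y := by
  obtain ⟨u, v, w, rfl, rfl, rfl⟩ := h
  exact ⟨u.length, palindromeAt_append u v w, pdelAt_append u v w⟩

namespace PalindromeAt

variable {ℓ c : ℕ} {x : List α}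

lemma getElem?_eq_of_add_eq (h : PalindromeAt ℓ c x) {i j : ℕ} (hi : c ≤ i) (hj : c ≤ j)
    (hij : i + j + 1 = 2 * (c + ℓ)) : x[i]? = x[j]? := by
  wlog hlt : i < j generalizing i j
  · exact (this hj hi (by omega) (by omega)).symm
  have reflection := h.2 (i - c) (by omega)
  rwa [show 2 * ℓ + c - (i - c) - 1 = j by omega, show c + (i - c) = i by omega, eq_comm]
    at reflection

lemma getElem?_add_two (h : PalindromeAt ℓ c x) (h' : PalindromeAt ℓ (c + 1) x) {i : ℕ}
    (hi : c ≤ i) (hi' : i + 2 ≤ c + 2 * ℓ) : x[i + 2]? = x[i]? :=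
  calc x[i + 2]? = x[2 * (c + ℓ) - 1 - i]? :=
        h'.getElem?_eq_of_add_eq (by omega) (by omega) (by omega)
    _ = x[i]? := h.getElem?_eq_of_add_eq (by omega) (by omega) (by omega)

lemma getElem?_add_eq (h : PalindromeAt ℓ c x) (h' : PalindromeAt ℓ (c + 1) x) {k : ℕ}
    (hk : k ≤ ℓ) : x[c + ℓ + k]? = x[c + ℓ]? := by
  induction k using Nat.twoStepInduction with
  | zero => rfl
  | one => exact h'.getElem?_eq_of_add_eq (by omega) (by omega) (by omega)
  | more k ih _ =>
    exact (h.getElem?_add_two h' (i := c + ℓ + k) (by omega) (by omega)).trans (ih (by omega))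

end PalindromeAt

lemma pdelAt_succ_eq_of_getElem?_eq {ℓ c : ℕ} {x : List α} (h : x[c + 2 * ℓ]? = x[c + ℓ]?) :
    pdelAt (c + 1) ℓ x = pdelAt c ℓ x :=
  calc x.take (c + 1 + ℓ) ++ x.drop (c + 1 + 2 * ℓ)
      = x.take (c + ℓ) ++ x[c + ℓ]?.toList ++ x.drop (c + 2 * ℓ + 1) := by
        rw [← List.take_add_one, Nat.add_right_comm c 1 ℓ, Nat.add_right_comm c 1 (2 * ℓ)]
    _ = x.take (c + ℓ) ++ x.drop (c + 2 * ℓ) := by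
        rw [← h, List.append_assoc, ← List.drop_eq_getElem?_toList_append]

lemma PalindromeAt.pdelAt_succ_eq {ℓ c : ℕ} {x : List α} (h : PalindromeAt ℓ c x)
    (h' : PalindromeAt ℓ (c + 1) x) : pdelAt (c + 1) ℓ x = pdelAt c ℓ x := by
  apply pdelAt_succ_eq_of_getElem?_eq
  simpa only [two_mul, add_assoc] using h.getElem?_add_eq h' le_rfl

/-- For each of the `|x| - 2ℓ + 1` positions at which a window of length `2ℓ` can start, whether
this window is a palindrome. (If `|x| < 2ℓ`, truncated subtraction leaves the single entry
`false`.) -/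
def palindromeIndicator [DecidableEq α] (ℓ : ℕ) (x : List α) : List Bool :=
  (List.range (x.length - 2 * ℓ + 1)).map (fun c => decide (PalindromeAt ℓ c x))

lemma palindromeIndicator_getElem?_eq_some_true [DecidableEq α] {ℓ c : ℕ} {x : List α} :
    (palindromeIndicator ℓ x)[c]? = some true ↔ PalindromeAt ℓ c x := by
  simp only [palindromeIndicator, List.getElem?_map, Option.map_eq_some_iff,
    List.getElem?_eq_some_iff, List.length_range, List.getElem_range, decide_eq_true_eq]
  constructor
  · rintro ⟨_, ⟨_, rfl⟩, h⟩
    exact h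
  · intro h
    have := h.1
    exact ⟨c, ⟨by omega, rfl⟩, h⟩

lemma zeroColBlocks_eq_numRunsOf {q ℓ : ℕ} {x : List (ZMod q)} (hℓ : 2 * ℓ ≤ x.length) :
    zeroColBlocks q ℓ x.length x = numRunsOf true (palindromeIndicator ℓ x) := by
  suffices column_zero_iff : ∀ c < x.length - 2 * ℓ + 1,
      (∀ s < ℓ, x.getD (2 * ℓ + c - s - 1) 0 = x.getD (c + s) 0) ↔ PalindromeAt ℓ c x by
    rw [zeroColBlocks, numRunsOf, palindromeIndicator]
    congr 3
    refine List.map_congr_left fun c hc => Bool.eq_iff_iff.2 ?_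
    simpa only [List.all_eq_true, List.mem_range, decide_eq_true_eq] using
      column_zero_iff c (List.mem_range.1 hc)
  intro c hc
  rw [PalindromeAt, and_iff_right (by omega)]
  refine forall₂_congr fun s hs => ?_
  rw [List.getD_eq_getElem _ _ (by omega), List.getD_eq_getElem _ _ (by omega),
    List.getElem?_eq_getElem (by omega), List.getElem?_eq_getElem (by omega), Option.some.injEq]

lemma sphere_one (rel : List α → List α → Prop) (x : List α) :
    sphere rel 1 x = insert x {y | rel x y} := by
  ext y
  simp [sphere, Nat.le_one_iff_eq_zero_or_eq_one, reachK, or_and_right, exists_or, eq_comm]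

theorem stmt12_general [DecidableEq α] (ℓ : ℕ) (x : List α) :
    (sphere (PDel ℓ) 1 x).encard ≤ numRunsOf true (palindromeIndicator ℓ x) + 1 := by
  set L := palindromeIndicator ℓ x
  have deletions_subset : {y | PDel ℓ x y} ⊆ (pdelAt · ℓ x) '' {c | L[c]? = some true} := by
    intro y hy
    obtain ⟨c, hc, rfl⟩ := PDel.exists_pdelAt_eq hy
    exact ⟨c, palindromeIndicator_getElem?_eq_some_true.2 hc, rfl⟩
  have constant_on_blocks (c : ℕ) (hc : L[c]? = some true) (hc' : L[c + 1]? = some true) :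
      pdelAt c ℓ x = pdelAt (c + 1) ℓ x := by
    rw [palindromeIndicator_getElem?_eq_some_true] at hc hc'
    exact (hc.pdelAt_succ_eq hc').symm
  calc (sphere (PDel ℓ) 1 x).encard
      ≤ {y | PDel ℓ x y}.encard + 1 := sphere_one (PDel ℓ) x ▸ Set.encard_insert_le _ _
    _ ≤ ((pdelAt · ℓ x) '' {c | L[c]? = some true}).encard + 1 := by gcongr
    _ ≤ numRunsOf true L + 1 := by
        gcongr
        exact encard_image_le_numRunsOf true L _ constant_on_blocks

/-- Upper bound on the single palindromic deletion sphere: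
`|S_{π^δ,ℓ}(x)| ≤ r^{(0)}(A^π_ℓ(x)) + 1`. -/
theorem stmt12 (q ℓ n : ℕ) (hq : 2 ≤ q) (hℓ : 1 ≤ ℓ) (hn : 2 * ℓ ≤ n)
    (x : List (ZMod q)) (hx : x.length = n) :
    (sphere (PDel ℓ) 1 x).ncard ≤ zeroColBlocks q ℓ n x + 1 := by
  subst hx
  rw [zeroColBlocks_eq_numRunsOf hn]
  exact ENat.toNat_le_of_le_natCast (mod_cast stmt12_general ℓ x)

end DupPaper
end

section
/- For all integers q ≥ 2, ℓ ≥ 1 and n ≥ 2ℓ, every code C ⊆ Z_q^n that is single palindromic-deletion correcting for deletions of length ℓ satisfies |C| ≤ Σ_{x ∈ Z_q^n} 1/|S_{π^δ,ℓ}(x)| + Σ_{x' ∈ Z_q^{n−ℓ}} 1/|S_{π^δ,ℓ}(x')| (the generalized sphere packing bound). -/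
/-!
Write `D(x)` for the set of results of one palindromic deletion of length `ℓ` on `x`, so that
`|S(x)| = |D(x)| + 1`. The usual argument for such a bound would need
`∑_{y ∈ S(c)} 1 / |S(y)| ≥ 1` for every codeword `c`, for instance via `|S(y)| ≤ |S(c)|`. This
can fail: for `ℓ = 3`, the word `aabbaabaabb` has the single deletion result `aabbaabb`,
which has two deletion results itself. The slack in the first sum makes up for it.

Codewords `c` with `D(c) = ∅` are paid for by their own terms `1 / |S(c)| = 1`. The sets `D(c)` of
the remaining codewords are disjoint, so it is enough that each `y` of length `n - ℓ` can pay
`1 / |D(c)|` whenever `y ∈ D(c)`. The word `y` has at its disposal its own term `1 / |S(y)|` and, if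
`D(y) ≠ ∅`, the terms `1 / |S(y z)|` of its `q ^ ℓ` extensions by words `z` of length `ℓ`. The
latter are terms of the first sum, belong to words with `D(y z) ≠ ∅`, and differ for different `y`.

If `D(y) = ∅`, the own term is `1`, which is enough. Otherwise two estimates are combined:
`|D(y)| ≤ |D(c)| + 2ℓ - 2` for `y ∈ D(c)`, and `|D(y z)| ≤ |D(y)| + ℓ`, where the last bound
improves to `|D(y)| + ℓ - 1` for all but one `z`.
-/

namespace DupPaper

variable {α : Type*}

open Finset

/-! ### Palindromic deletions at a position -/

/-- `y` is the result of the palindromic deletion `π^δ_{i,ℓ}` on `x`, which is defined there: the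
relation `PDel` with the position recorded. -/
def IsPDelAt (ℓ i : ℕ) (x y : List α) : Prop :=
  ∃ u v w : List α, u.length = i ∧ v.length = ℓ ∧ x = u ++ v ++ v.reverse ++ w ∧ y = u ++ v ++ w

theorem pdel_iff_exists_isPDelAt {ℓ : ℕ} {x y : List α} :
    PDel ℓ x y ↔ ∃ i, IsPDelAt ℓ i x y := by
  constructor
  · rintro ⟨u, v, w, hv, hx, hy⟩
    exact ⟨u.length, u, v, w, rfl, hv, hx, hy⟩
  · rintro ⟨-, u, v, w, -, hv, hx, hy⟩
    exact ⟨u, v, w, hv, hx, hy⟩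

namespace IsPDelAt

variable {ℓ i : ℕ} {a b x y t : List α}

theorem eq_pdelAt (h : IsPDelAt ℓ i x y) : y = pdelAt i ℓ x := by
  obtain ⟨u, v, w, rfl, rfl, rfl, rfl⟩ := h
  have htake : u.length + v.length = (u ++ v).length := by simp
  have hdrop : u.length + 2 * v.length = (u ++ v ++ v.reverse).length := by
    simp only [List.length_append, List.length_reverse]
    omega
  rw [pdelAt, hdrop, List.drop_left, htake, List.append_assoc (u ++ v), List.take_left]

theorem add_two_mul_le_length (h : IsPDelAt ℓ i x y) : i + 2 * ℓ ≤ x.length := by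
  obtain ⟨u, v, w, rfl, rfl, rfl, rfl⟩ := h
  simp only [List.length_append, List.length_reverse]
  omega

theorem of_append_of_le (h : IsPDelAt ℓ i (a ++ b) t) (hi : i + 2 * ℓ ≤ a.length) :
    ∃ a', IsPDelAt ℓ i a a' ∧ t = a' ++ b := by
  obtain ⟨u, v, w, rfl, rfl, hab, rfl⟩ := h
  obtain ⟨w', rfl⟩ : u ++ v ++ v.reverse <+: a :=
    List.prefix_of_prefix_length_le ⟨w, hab.symm⟩ ⟨b, rfl⟩ (by grind)
  rw [List.append_assoc, List.append_cancel_left_eq] at hab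
  exact ⟨u ++ v ++ w', ⟨u, v, w', rfl, rfl, rfl, rfl⟩, by simp [← hab]⟩

theorem of_append_of_length_le (h : IsPDelAt ℓ i (a ++ b) t) (hi : a.length ≤ i) :
    ∃ b', IsPDelAt ℓ (i - a.length) b b' ∧ t = a ++ b' := by
  obtain ⟨u, v, w, rfl, rfl, hab, rfl⟩ := h
  obtain ⟨u', rfl⟩ : a <+: u :=
    List.prefix_of_prefix_length_le ⟨b, rfl⟩ ⟨v ++ v.reverse ++ w, by simp [hab]⟩ hi
  simp only [List.append_assoc, List.append_cancel_left_eq] at hab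
  exact ⟨u' ++ v ++ w, ⟨u', v, w, by simp, rfl, by simp [hab], rfl⟩, by simp⟩

theorem eq_reverse_drop (h : IsPDelAt ℓ (a.length - ℓ) (a ++ b) t) (hb : b.length = ℓ) :
    b = (a.drop (a.length - ℓ)).reverse := by
  have hle := h.add_two_mul_le_length
  obtain ⟨u, v, w, hu, rfl, hab, rfl⟩ := h
  rw [List.length_append] at hle
  rw [List.append_assoc (u ++ v)] at hab
  obtain ⟨rfl, rfl⟩ := List.append_inj hab (by grind)
  have hw : w = [] := List.length_eq_zero_iff.1 (by simpa using hb)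
  rw [← hu, List.drop_left, hw, List.append_nil]

end IsPDelAt

namespace PDel

variable {ℓ : ℕ} {x y : List α}

theorem append_right (h : PDel ℓ x y) (s : List α) : PDel ℓ (x ++ s) (y ++ s) := by
  obtain ⟨u, v, w, hv, rfl, rfl⟩ := h
  exact ⟨u, v, w ++ s, hv, by simp, by simp⟩

theorem append_left (h : PDel ℓ x y) (s : List α) : PDel ℓ (s ++ x) (s ++ y) := by
  obtain ⟨u, v, w, hv, rfl, rfl⟩ := h
  exact ⟨s ++ u, v, w, hv, by simp, by simp⟩

theorem length_eq (h : PDel ℓ x y) : x.length = y.length + ℓ := by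
  obtain ⟨u, v, w, rfl, rfl, rfl⟩ := h
  simp only [List.length_append, List.length_reverse]
  omega

theorem le_length (h : PDel ℓ x y) : ℓ ≤ y.length := by
  obtain ⟨u, v, w, rfl, rfl, rfl⟩ := h
  simp only [List.length_append]
  omega

end PDel

/-! ### The set of deletion results -/

theorem finite_setOf_pdel (ℓ : ℕ) (x : List α) : {y | PDel ℓ x y}.Finite := by
  refine ((Set.finite_Iic x.length).image (pdelAt · ℓ x)).subset fun y hy => ?_
  obtain ⟨i, hi⟩ := pdel_iff_exists_isPDelAt.1 hy
  have := hi.add_two_mul_le_length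
  exact ⟨i, Set.mem_Iic.2 (by omega), hi.eq_pdelAt.symm⟩

/-- The set `D(x)` of words obtained from `x` by exactly one palindromic deletion of length `ℓ`. -/
noncomputable def dels (ℓ : ℕ) (x : List α) : Finset (List α) :=
  (finite_setOf_pdel ℓ x).toFinset

@[simp]
theorem mem_dels {ℓ : ℕ} {x y : List α} : y ∈ dels ℓ x ↔ PDel ℓ x y := by
  simp [dels]

theorem dels_append_nonempty {ℓ : ℕ} {y : List α} (h : (dels ℓ y).Nonempty) (z : List α) :
    (dels ℓ (y ++ z)).Nonempty := by
  obtain ⟨t, ht⟩ := h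
  exact ⟨t ++ z, mem_dels.2 ((mem_dels.1 ht).append_right z)⟩

theorem sphere_pdel_one (ℓ : ℕ) (x : List α) :
    sphere (PDel ℓ) 1 x = insert x (dels ℓ x : Set (List α)) := by
  ext y
  simp [sphere, Nat.le_one_iff_eq_zero_or_eq_one, or_and_right, exists_or, reachK, eq_comm]

theorem ncard_sphere_pdel_one {ℓ : ℕ} (hℓ : 1 ≤ ℓ) (x : List α) :
    (sphere (PDel ℓ) 1 x).ncard = #(dels ℓ x) + 1 := by
  rw [sphere_pdel_one, Set.ncard_insert_of_notMem, Set.ncard_coe_finset]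
  intro hx
  have := (mem_dels.1 (mem_coe.1 hx)).length_eq
  omega

theorem Correcting.pairwiseDisjoint_dels {ℓ : ℕ} {C : Set (List α)}
    (h : Correcting (PDel ℓ) 1 C) : C.PairwiseDisjoint (dels ℓ) := by
  intro c hc c' hc' hne
  refine Finset.disjoint_left.2 fun y hy hy' => hne (h c hc c' hc' ⟨y, ?_, ?_⟩)
  all_goals rw [sphere_pdel_one]
  exacts [Or.inr hy, Or.inr hy']

/-! ### Deletion results of shortened and of extended words -/

/-- `t'` arises from `t` by putting back the factor `v.reverse` that is removed in the deletion
`u v vᴿ w ↦ u v w`. Here `t` is meant to be a deletion result of `u v w` that still shows the part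
`w` (first case) or the part `u v` (second case). -/
def Restores (u v w t t' : List α) : Prop :=
  (∃ s, s.length = u.length ∧ t = s ++ w ∧ t' = s ++ v.reverse ++ w) ∨
    ∃ w', t = u ++ v ++ w' ∧ t' = u ++ v ++ v.reverse ++ w'

theorem leftUnique_restores (u v w : List α) : Relator.LeftUnique (Restores u v w) := by
  have cross : ∀ {s w' : List α}, s.length = u.length →
      s ++ v.reverse ++ w = u ++ v ++ v.reverse ++ w' → s ++ w = u ++ v ++ w' := by
    intro s w' hs h
    simp only [List.append_assoc] at h
    obtain ⟨hsu, htail⟩ := List.append_inj h hs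
    obtain ⟨hv, hw⟩ := List.append_inj htail (by simp)
    rw [hsu, hw, hv, List.append_assoc]
  rintro t₁ t₂ t' (⟨s₁, hs₁, rfl, h₁⟩ | ⟨w₁, rfl, h₁⟩) (⟨s₂, hs₂, rfl, h₂⟩ | ⟨w₂, rfl, h₂⟩)
  · have : s₁ = s₂ := by simpa using h₁.symm.trans h₂
    rw [this]
  · exact cross hs₁ (h₁.symm.trans h₂)
  · exact (cross hs₂ (h₂.symm.trans h₁)).symm
  · have : w₁ = w₂ := by simpa using h₁.symm.trans h₂
    rw [this]

theorem IsPDelAt.exists_restores {i : ℕ} {u v w t : List α}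
    (h : IsPDelAt v.length i (u ++ v ++ w) t)
    (hi : i + v.length ≤ u.length ∨ i = u.length ∨ u.length + v.length ≤ i) :
    ∃ t', PDel v.length (u ++ v ++ v.reverse ++ w) t' ∧ Restores u v w t t' := by
  rcases hi with hi | rfl | hi
  · obtain ⟨s, hs, rfl⟩ := h.of_append_of_le (by grind)
    have hdel : PDel v.length (u ++ v) s := pdel_iff_exists_isPDelAt.2 ⟨i, hs⟩
    have hlen : s.length = u.length := by simpa using hdel.length_eq.symm
    exact ⟨s ++ v.reverse ++ w, (hdel.append_right _).append_right _, .inl ⟨s, hlen, rfl, rfl⟩⟩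
  · -- `w` starts with `vᴿ`, and `u v w` itself is the deletion result of `u v vᴿ w` to use
    obtain ⟨p, r, s, hp, hr, hw, rfl⟩ := h
    simp only [List.append_assoc] at hw
    obtain ⟨rfl, htail⟩ := List.append_inj hw hp.symm
    obtain ⟨rfl, rfl⟩ := List.append_inj htail hr.symm
    exact ⟨u ++ v ++ v.reverse ++ s, ⟨u, v, v.reverse ++ s, rfl, by simp, by simp⟩,
      .inr ⟨s, rfl, rfl⟩⟩
  · obtain ⟨w', hw', rfl⟩ := h.of_append_of_length_le (by simpa using hi)
    have hdel : PDel v.length w w' := pdel_iff_exists_isPDelAt.2 ⟨_, hw'⟩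
    exact ⟨u ++ v ++ v.reverse ++ w', hdel.append_left _, .inr ⟨w', rfl, rfl⟩⟩

theorem card_dels_add_two_le_of_pdel {ℓ : ℕ} {x y : List α} (hℓ : 1 ≤ ℓ) (h : PDel ℓ x y) :
    #(dels ℓ y) + 2 ≤ #(dels ℓ x) + 2 * ℓ := by
  classical
  obtain ⟨u, v, w, rfl, rfl, rfl⟩ := h
  set positions := (Ico (u.length + 1 - v.length) (u.length + v.length)).erase u.length
    with hpositions
  set straddling := positions.image (pdelAt · v.length (u ++ v ++ w))
  have hstraddling : #straddling + 2 ≤ 2 * v.length := by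
    have hmem : u.length ∈ Ico (u.length + 1 - v.length) (u.length + v.length) := by
      simp only [mem_Ico]; omega
    have hle : #straddling ≤ #positions := card_image_le
    rw [hpositions, card_erase_of_mem hmem, Nat.card_Ico] at hle
    omega
  have hother : #(dels v.length (u ++ v ++ w) \ straddling) ≤
      #(dels v.length (u ++ v ++ v.reverse ++ w)) := by
    refine card_le_card_of_forall_subsingleton (Restores u v w) (fun t ht => ?_)
      fun t' _ t₁ ht₁ t₂ ht₂ => leftUnique_restores u v w ht₁.2 ht₂.2
    rw [mem_sdiff, mem_dels, pdel_iff_exists_isPDelAt] at ht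
    obtain ⟨⟨i, hi⟩, hnot⟩ := ht
    have hpos : i ∉ positions := fun hmem => hnot (mem_image.2 ⟨i, hmem, hi.eq_pdelAt.symm⟩)
    simp only [hpositions, mem_erase, mem_Ico] at hpos
    obtain ⟨t', ht', hrestores⟩ := hi.exists_restores (by omega)
    exact ⟨t', mem_dels.2 ht', hrestores⟩
  have := card_le_card_sdiff_add_card (s := dels v.length (u ++ v ++ w)) (t := straddling)
  omega

theorem card_dels_append_le_add_card {ℓ : ℕ} {y z : List α} (positions : Finset ℕ)
    (h : ∀ i t, IsPDelAt ℓ i (y ++ z) t → y.length < i + 2 * ℓ → i ∈ positions) :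
    #(dels ℓ (y ++ z)) ≤ #(dels ℓ y) + #positions := by
  classical
  have hsub : dels ℓ (y ++ z) ⊆
      (dels ℓ y).image (· ++ z) ∪ positions.image (pdelAt · ℓ (y ++ z)) := by
    intro t ht
    obtain ⟨i, hi⟩ := pdel_iff_exists_isPDelAt.1 (mem_dels.1 ht)
    rw [mem_union, mem_image, mem_image]
    by_cases hiy : i + 2 * ℓ ≤ y.length
    · obtain ⟨y', hy', rfl⟩ := hi.of_append_of_le hiy
      exact .inl ⟨y', mem_dels.2 (pdel_iff_exists_isPDelAt.2 ⟨i, hy'⟩), rfl⟩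
    · exact .inr ⟨i, h i t hi (by omega), hi.eq_pdelAt.symm⟩
  calc #(dels ℓ (y ++ z)) ≤ _ := card_le_card hsub
    _ ≤ _ := card_union_le _ _
    _ ≤ #(dels ℓ y) + #positions := Nat.add_le_add card_image_le card_image_le

theorem card_dels_append_le {ℓ : ℕ} (y : List α) {z : List α} (hz : z.length = ℓ) :
    #(dels ℓ (y ++ z)) ≤ #(dels ℓ y) + ℓ := by
  have hle := card_dels_append_le_add_card (ℓ := ℓ) (y := y) (z := z)
    (Ico (y.length + 1 - 2 * ℓ) (y.length + 1 - ℓ)) fun i t hi hlt => by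
      have := hi.add_two_mul_le_length
      rw [List.length_append] at this
      exact mem_Ico.2 (by omega)
  rw [Nat.card_Ico] at hle
  omega

theorem card_dels_append_lt_of_ne {ℓ : ℕ} {y z : List α} (hℓ : 1 ≤ ℓ) (hz : z.length = ℓ)
    (hne : z ≠ (y.drop (y.length - ℓ)).reverse) :
    #(dels ℓ (y ++ z)) < #(dels ℓ y) + ℓ := by
  have hle := card_dels_append_le_add_card (ℓ := ℓ) (y := y) (z := z)
    (Ico (y.length + 1 - 2 * ℓ) (y.length - ℓ)) fun i t hi hlt => by
      have := hi.add_two_mul_le_length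
      rw [List.length_append] at this
      have hlast : i ≠ y.length - ℓ := fun h => hne ((h ▸ hi).eq_reverse_drop hz)
      exact mem_Ico.2 (by omega)
  rw [Nat.card_Ico] at hle
  omega

/-! ### The numerical inequality -/

theorem three_mul_le_two_pow {ℓ : ℕ} (h : 4 ≤ ℓ) : 3 * ℓ ≤ 2 ^ ℓ := by
  induction ℓ, h using Nat.le_induction with
  | base => norm_num
  | succ k _ ih => rw [pow_succ]; omega

theorem one_le_one_div_add_two_pow_div {ℓ : ℕ} (hℓ : 1 ≤ ℓ) :
    (1 : ℚ) ≤ 1 / (2 * ℓ) + ((2 ^ ℓ - 1) / (3 * ℓ - 1) + 1 / (3 * ℓ)) := by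
  by_cases h : 4 ≤ ℓ
  · have hpow : (3 * ℓ : ℚ) ≤ 2 ^ ℓ := by exact_mod_cast three_mul_le_two_pow h
    have hℓ' : (1 : ℚ) ≤ ℓ := by exact_mod_cast hℓ
    have hmid : (1 : ℚ) ≤ (2 ^ ℓ - 1) / (3 * ℓ - 1) := by
      rw [one_le_div (by linarith)]
      linarith
    have : (0 : ℚ) ≤ 1 / (2 * ℓ) := by positivity
    have : (0 : ℚ) ≤ 1 / (3 * ℓ) := by positivity
    linarith
  · interval_cases ℓ <;> norm_num

theorem one_div_le_of_two_pow_le {ℓ m k : ℕ} {Q : ℚ} (hℓ : 1 ≤ ℓ) (hm : 1 ≤ m)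
    (hk : k + 2 ≤ m + 2 * ℓ) (hQ : 2 ^ ℓ ≤ Q) :
    1 / (m : ℚ) ≤ 1 / (k + 1) + ((Q - 1) / (k + ℓ) + 1 / (k + ℓ + 1)) := by
  have hℓ' : (1 : ℚ) ≤ ℓ := by exact_mod_cast hℓ
  have hm' : (1 : ℚ) ≤ m := by exact_mod_cast hm
  have hk' : (k : ℚ) + 2 ≤ m + 2 * ℓ := by exact_mod_cast hk
  have hpow : (1 : ℚ) ≤ 2 ^ ℓ := one_le_pow₀ (by norm_num)
  have hprod : 0 ≤ ((m : ℚ) - 1) * (ℓ - 1) := mul_nonneg (by linarith) (by linarith)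
  calc (1 : ℚ) / m = 1 / m * 1 := (mul_one _).symm
    _ ≤ 1 / m * (1 / (2 * ℓ) + ((2 ^ ℓ - 1) / (3 * ℓ - 1) + 1 / (3 * ℓ))) := by
      gcongr
      exact one_le_one_div_add_two_pow_div hℓ
    _ = 1 / (m * (2 * ℓ)) + ((2 ^ ℓ - 1) / (m * (3 * ℓ - 1)) + 1 / (m * (3 * ℓ))) := by
      simp only [div_eq_mul_inv, mul_inv]
      ring
    _ ≤ 1 / (k + 1) + ((Q - 1) / (k + ℓ) + 1 / (k + ℓ + 1)) := by
      gcongr <;> nlinarith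

/-! ### Charging the codewords -/

theorem card_le_sum_of_pairwiseDisjoint {ι β K : Type*} [Field K] [LinearOrder K]
    [IsStrictOrderedRing K] {B : Finset ι} {D : ι → Finset β} {T : Finset β} {g : β → K}
    (hdisj : (B : Set ι).PairwiseDisjoint D) (hne : ∀ c ∈ B, (D c).Nonempty)
    (hT : ∀ c ∈ B, D c ⊆ T) (hg : ∀ y ∈ T, 0 ≤ g y)
    (hshare : ∀ c ∈ B, ∀ y ∈ D c, 1 / (#(D c) : K) ≤ g y) :
    (#B : K) ≤ ∑ y ∈ T, g y := by
  classical
  calc (#B : K) = ∑ c ∈ B, 1 := by simp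
    _ ≤ ∑ c ∈ B, ∑ y ∈ D c, g y := sum_le_sum fun c hc => by
      have hpos : (#(D c) : K) ≠ 0 := by exact_mod_cast (hne c hc).card_ne_zero
      simpa [hpos] using card_nsmul_le_sum (D c) g _ (hshare c hc)
    _ = ∑ y ∈ B.biUnion D, g y := (sum_biUnion hdisj).symm
    _ ≤ ∑ y ∈ T, g y :=
      sum_le_sum_of_subset_of_nonneg (biUnion_subset.2 hT) fun y hy _ => hg y hy

/-- The term `1 / |S(x)|` of the generalized sphere packing bound. -/
noncomputable def weight (ℓ : ℕ) (x : List α) : ℚ :=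
  1 / ((sphere (PDel ℓ) 1 x).ncard : ℚ)

theorem weight_nonneg (ℓ : ℕ) (x : List α) : 0 ≤ weight ℓ x := by
  unfold weight
  positivity

theorem weight_eq {ℓ : ℕ} (hℓ : 1 ≤ ℓ) (x : List α) : weight ℓ x = 1 / (#(dels ℓ x) + 1) := by
  rw [weight, ncard_sphere_pdel_one hℓ, Nat.cast_succ]

section Bound

variable [Fintype α]

/-- The finite set of all words of length `n` over the alphabet `α`. -/
noncomputable def words (α : Type*) [Fintype α] (n : ℕ) : Finset (List α) :=
  (univ : Finset (Fin n → α)).map ⟨List.ofFn, List.ofFn_injective⟩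

@[simp]
theorem mem_words {n : ℕ} {x : List α} : x ∈ words α n ↔ x.length = n := by
  constructor
  · intro h
    obtain ⟨f, -, rfl⟩ := mem_map.1 h
    simp
  · rintro rfl
    exact mem_map.2 ⟨x.get, mem_univ _, by simp⟩

theorem card_words (n : ℕ) : #(words α n) = Fintype.card α ^ n := by
  simp [words]

theorem sum_words {M : Type*} [AddCommMonoid M] (n : ℕ) (F : List α → M) :
    ∑ x ∈ words α n, F x = ∑ f : Fin n → α, F (List.ofFn f) := by
  simp [words]

theorem sum_words_add {M : Type*} [AddCommMonoid M] (m n : ℕ) (F : List α → M) :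
    ∑ x ∈ words α (m + n), F x = ∑ y ∈ words α m, ∑ z ∈ words α n, F (y ++ z) := by
  rw [← sum_product']
  refine sum_nbij' (fun x => (x.take m, x.drop m)) (fun p => p.1 ++ p.2) ?_ ?_ ?_ ?_ ?_
  · intro x hx
    simp_all
  · rintro ⟨y, z⟩ hyz
    simp_all
  · intro x _
    exact List.take_append_drop m x
  · rintro ⟨y, z⟩ hyz
    simp_all
  · intro x _
    rw [List.take_append_drop]

theorem le_sum_weight_append {ℓ : ℕ} {y : List α} (hℓ : 1 ≤ ℓ) (hy : ℓ ≤ y.length) :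
    ((Fintype.card α : ℚ) ^ ℓ - 1) / (#(dels ℓ y) + ℓ) + 1 / (#(dels ℓ y) + ℓ + 1) ≤
      ∑ z ∈ words α ℓ, weight ℓ (y ++ z) := by
  classical
  set z₀ := (y.drop (y.length - ℓ)).reverse with hz₀
  have hmem : z₀ ∈ words α ℓ := by
    rw [mem_words, hz₀, List.length_reverse, List.length_drop]
    omega
  have hcard : (#((words α ℓ).erase z₀) : ℚ) = (Fintype.card α : ℚ) ^ ℓ - 1 := by
    rw [cast_card_erase_of_mem hmem, card_words, Nat.cast_pow]
  rw [← sum_erase_add _ _ hmem, ← hcard]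
  refine add_le_add ?_ ?_
  · rw [← mul_one_div, ← nsmul_eq_mul]
    refine card_nsmul_le_sum _ _ _ fun z hz => ?_
    obtain ⟨hne, hz⟩ := mem_erase.1 hz
    rw [weight_eq hℓ]
    exact one_div_le_one_div_of_le (by positivity)
      (by exact_mod_cast card_dels_append_lt_of_ne hℓ (mem_words.1 hz) hne)
  · rw [weight_eq hℓ]
    exact one_div_le_one_div_of_le (by positivity)
      (by exact_mod_cast Nat.succ_le_succ (card_dels_append_le y (mem_words.1 hmem)))

/-- What a word `y` of length `n - ℓ` can pay towards the codeword `c` with `y ∈ D(c)`: its own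
weight and, if `D(y)` is nonempty, the weights of all its extensions by `ℓ` symbols. -/
noncomputable def charge (ℓ : ℕ) (y : List α) : ℚ :=
  weight ℓ y + if (dels ℓ y).Nonempty then ∑ z ∈ words α ℓ, weight ℓ (y ++ z) else 0

theorem charge_nonneg (ℓ : ℕ) (y : List α) : 0 ≤ charge ℓ y := by
  have hsum : 0 ≤ ∑ z ∈ words α ℓ, weight ℓ (y ++ z) := sum_nonneg fun z _ => weight_nonneg ℓ _
  have hy := weight_nonneg ℓ y
  unfold charge
  split_ifs <;> positivity

theorem one_div_card_dels_le_charge [Nontrivial α] {ℓ : ℕ} (hℓ : 1 ≤ ℓ) {c y : List α}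
    (h : PDel ℓ c y) : 1 / (#(dels ℓ c) : ℚ) ≤ charge ℓ y := by
  have hpos : 1 ≤ #(dels ℓ c) := card_pos.2 ⟨y, mem_dels.2 h⟩
  rw [charge, weight_eq hℓ]
  split_ifs with hy
  · have hα : (2 : ℚ) ≤ Fintype.card α := by exact_mod_cast Fintype.one_lt_card
    calc 1 / (#(dels ℓ c) : ℚ) ≤ _ :=
          one_div_le_of_two_pow_le hℓ hpos (card_dels_add_two_le_of_pdel hℓ h)
            (pow_le_pow_left₀ (by norm_num) hα ℓ)
      _ ≤ _ := by gcongr; exact le_sum_weight_append hℓ h.le_length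
  · rw [not_nonempty_iff_eq_empty.1 hy]
    simpa using inv_le_one_of_one_le₀ (Nat.one_le_cast.2 hpos)

theorem sum_charge_le (ℓ n : ℕ) :
    ∑ y ∈ words α n, charge ℓ y ≤
      ∑ x ∈ words α (n + ℓ) with (dels ℓ x).Nonempty, weight ℓ x +
        ∑ y ∈ words α n, weight ℓ y := by
  simp only [charge]
  rw [sum_add_distrib, add_comm, sum_filter, sum_words_add]
  gcongr with y
  split_ifs with hy
  · exact (sum_congr rfl fun z _ => (if_pos (dels_append_nonempty hy z)).symm).le
  · exact sum_nonneg fun z _ => by split_ifs <;> simp [weight_nonneg]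

theorem card_filter_dels_nonempty_le [Nontrivial α] {ℓ n : ℕ} (hℓ : 1 ≤ ℓ)
    {C : Finset (List α)} (hC : ∀ c ∈ C, c.length = n + ℓ)
    (hcorr : Correcting (PDel ℓ) 1 (C : Set (List α))) :
    (#{c ∈ C | (dels ℓ c).Nonempty} : ℚ) ≤ ∑ y ∈ words α n, charge ℓ y := by
  refine card_le_sum_of_pairwiseDisjoint
    (hcorr.pairwiseDisjoint_dels.subset (coe_subset.2 (filter_subset _ C)))
    (fun c hc => (mem_filter.1 hc).2) (fun c hc y hy => ?_) (fun y _ => charge_nonneg ℓ y)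
    fun c _ y hy => one_div_card_dels_le_charge hℓ (mem_dels.1 hy)
  have hlen := hC c (mem_filter.1 hc).1
  rw [(mem_dels.1 hy).length_eq] at hlen
  exact mem_words.2 (by omega)

theorem card_filter_not_dels_nonempty_le {ℓ n : ℕ} (hℓ : 1 ≤ ℓ) {C : Finset (List α)}
    (hC : ∀ c ∈ C, c.length = n) :
    (#{c ∈ C | ¬ (dels ℓ c).Nonempty} : ℚ) ≤
      ∑ x ∈ words α n with ¬ (dels ℓ x).Nonempty, weight ℓ x := by
  have hone : ∀ x ∈ (words α n).filter (fun x => ¬ (dels ℓ x).Nonempty), weight ℓ x = 1 := by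
    intro x hx
    rw [weight_eq hℓ, not_nonempty_iff_eq_empty.1 (mem_filter.1 hx).2]
    simp
  rw [sum_congr rfl hone, sum_const, nsmul_one]
  exact_mod_cast card_le_card (filter_subset_filter _ fun c hc => mem_words.2 (hC c hc))

theorem stmt14_general [Nontrivial α] {ℓ n : ℕ} (hℓ : 1 ≤ ℓ) (hn : ℓ ≤ n)
    (C : Finset (List α)) (hC : ∀ c ∈ C, c.length = n)
    (hcorr : Correcting (PDel ℓ) 1 (C : Set (List α))) :
    (#C : ℚ) ≤
      (∑ x : Fin n → α, 1 / ((sphere (PDel ℓ) 1 (List.ofFn x)).ncard : ℚ)) +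
        ∑ x : Fin (n - ℓ) → α, 1 / ((sphere (PDel ℓ) 1 (List.ofFn x)).ncard : ℚ) := by
  obtain ⟨k, rfl⟩ := Nat.exists_eq_add_of_le' hn
  rw [Nat.add_sub_cancel]
  calc (#C : ℚ)
      = #{c ∈ C | (dels ℓ c).Nonempty} + #{c ∈ C | ¬ (dels ℓ c).Nonempty} := by
        exact_mod_cast (card_filter_add_card_filter_not _).symm
    _ ≤ (∑ x ∈ words α (k + ℓ) with (dels ℓ x).Nonempty, weight ℓ x +
            ∑ y ∈ words α k, weight ℓ y) +
          ∑ x ∈ words α (k + ℓ) with ¬ (dels ℓ x).Nonempty, weight ℓ x :=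
        add_le_add ((card_filter_dels_nonempty_le hℓ hC hcorr).trans (sum_charge_le ℓ k))
          (card_filter_not_dels_nonempty_le hℓ hC)
    _ = ∑ x ∈ words α (k + ℓ), weight ℓ x + ∑ y ∈ words α k, weight ℓ y := by
        rw [add_right_comm, sum_filter_add_sum_filter_not]
    _ = _ := by rw [sum_words, sum_words]; rfl

end Bound

/-- Generalized sphere packing bound for single palindromic-deletion correcting codes:
`|C| ≤ Σ_{x ∈ Z_q^n} 1/|S_{π^δ,ℓ}(x)| + Σ_{x' ∈ Z_q^{n−ℓ}} 1/|S_{π^δ,ℓ}(x')|`. -/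
theorem stmt14 (q ℓ n : ℕ) (hq : 2 ≤ q) (hℓ : 1 ≤ ℓ) (hn : 2 * ℓ ≤ n)
    (C : Finset (List (ZMod q))) (hC : ∀ c ∈ C, c.length = n)
    (hcorr : Correcting (PDel ℓ) 1 (↑C : Set (List (ZMod q)))) :
    haveI : NeZero q := ⟨by omega⟩
    (C.card : ℚ) ≤
      (∑ x : Fin n → ZMod q, 1 / ((sphere (PDel ℓ) 1 (List.ofFn x)).ncard : ℚ)) +
        ∑ x : Fin (n - ℓ) → ZMod q, 1 / ((sphere (PDel ℓ) 1 (List.ofFn x)).ncard : ℚ) := by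
  have : NeZero q := ⟨by omega⟩
  have : Fact (1 < q) := ⟨hq⟩
  exact stmt14_general hℓ (by omega) C hC hcorr

end DupPaper
end
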